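/- Let S₄₈ be the set of vectors v ∈ (ℤ/4ℤ)⁴ such that 2·v₂ = 0, 2·v₄ = 0, and not both 2·v₁ = 0 and 2·v₃ = 0 (equivalently: v₂ and v₄ lie in {0,2} and at least one of v₁, v₃ is odd); this set has 48 elements. Then S₄₈ is invariant under multiplication by the reduction of E(M) modulo 4 for every M ∈ G_Δ, and the action is transitive on S₄₈: for any v, w ∈ S₄₈ there exists M ∈ G_Δ with (E(M) mod 4)·v = w. -/

import Mathlib

open Matrix

/-- The standard symplectic matrix `J = [[0, I₂], [−I₂, 0]]` over `ℚ`. -/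
def Jmat : Matrix (Fin 4) (Fin 4) ℚ :=
  !![0, 0, 1, 0; 0, 0, 0, 1; -1, 0, 0, 0; 0, -1, 0, 0]

/-- A rational number is an integer. -/
def IsIntEntry (q : ℚ) : Prop := ∃ n : ℤ, q = n

/-- A rational number is an even integer (lies in `2ℤ`). -/
def IsEvenEntry (q : ℚ) : Prop := ∃ n : ℤ, q = 2 * n

/-- A rational number is a half-integer (`2·q ∈ ℤ`). -/
def IsHalfIntEntry (q : ℚ) : Prop := ∃ n : ℤ, 2 * q = n

/-- Membership in the paramodular group `G_Δ` for `Δ = diag(1,2)`: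
`Mᵀ·J·M = J`, together with the integrality pattern: all entries in `ℤ`,
except that `M₁₄, M₂₁, M₂₃, M₂₄, M₃₄ ∈ 2ℤ` and `2·M₄₂ ∈ ℤ`
(indices here are 0-based: `M 0 3, M 1 0, M 1 2, M 1 3, M 2 3, M 3 1`). -/
def IsParamodular (M : Matrix (Fin 4) (Fin 4) ℚ) : Prop :=
  Mᵀ * Jmat * M = Jmat ∧
  IsEvenEntry (M 0 3) ∧ IsEvenEntry (M 1 0) ∧ IsEvenEntry (M 1 2) ∧
  IsEvenEntry (M 1 3) ∧ IsEvenEntry (M 2 3) ∧ IsHalfIntEntry (M 3 1) ∧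
  ∀ i j : Fin 4,
    (i, j) ∉ ({(0, 3), (1, 0), (1, 2), (1, 3), (2, 3), (3, 1)} :
      Set (Fin 4 × Fin 4)) → IsIntEntry (M i j)

/-- The diagonal matrix `D = diag(1,1,1,2)` over `ℚ`. -/
def Dmat : Matrix (Fin 4) (Fin 4) ℚ :=
  !![1, 0, 0, 0; 0, 1, 0, 0; 0, 0, 1, 0; 0, 0, 0, 2]

/-- The conjugation `E(M) = D·M·D⁻¹`. -/
noncomputable def Emat (M : Matrix (Fin 4) (Fin 4) ℚ) : Matrix (Fin 4) (Fin 4) ℚ :=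
  Dmat * M * Dmat⁻¹

/-- Reduction modulo 2 of a rational matrix with integer entries
(entrywise, via the numerator). -/
def red2 (M : Matrix (Fin 4) (Fin 4) ℚ) : Matrix (Fin 4) (Fin 4) (ZMod 2) :=
  Matrix.of fun i j => ((M i j).num : ZMod 2)

/-- Reduction modulo 4 of a rational matrix with integer entries. -/
def red4 (M : Matrix (Fin 4) (Fin 4) ℚ) : Matrix (Fin 4) (Fin 4) (ZMod 4) :=
  Matrix.of fun i j => ((M i j).num : ZMod 4)

/-- The set `S₄₈ ⊂ (ℤ/4ℤ)⁴` of vectors with `2·v₂ = 0`, `2·v₄ = 0`, and not both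
`2·v₁ = 0` and `2·v₃ = 0` (0-based indices). -/
def S48 : Set (Fin 4 → ZMod 4) :=
  {v | 2 * v 1 = 0 ∧ 2 * v 3 = 0 ∧ ¬(2 * v 0 = 0 ∧ 2 * v 2 = 0)}

theorem Dmat_inv_aux : Dmat⁻¹ = !![1, 0, 0, 0; 0, 1, 0, 0; 0, 0, 1, 0; 0, 0, 0, 1/2] := by
  apply Matrix.inv_eq_right_inv
  ext i j
  fin_cases i <;> fin_cases j <;> simp [Dmat, Matrix.mul_apply, Fin.sum_univ_four]

theorem Emat_aux (M : Matrix (Fin 4) (Fin 4) ℚ) :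
    Emat M = !![M 0 0, M 0 1, M 0 2, M 0 3 / 2; M 1 0, M 1 1, M 1 2, M 1 3 / 2;
      M 2 0, M 2 1, M 2 2, M 2 3 / 2; 2 * M 3 0, 2 * M 3 1, 2 * M 3 2, M 3 3] := by
  unfold Emat
  rw [Dmat_inv_aux]
  ext i j
  fin_cases i <;> fin_cases j <;>
    simp [Dmat, Matrix.mul_apply, Matrix.vecMul, dotProduct, Fin.sum_univ_four] <;> ring

/-- the form preserved by `E(M)`, scaled by two -/
def K4 : Matrix (Fin 4) (Fin 4) ℤ :=
  !![0, 0, 2, 0; 0, 0, 0, 1; -2, 0, 0, 0; 0, -1, 0, 0]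

/-- integral version of the paramodular condition -/
def PInt (N : Matrix (Fin 4) (Fin 4) ℤ) : Prop :=
  Nᵀ * K4 * N = K4 ∧ 2 ∣ N 1 0 ∧ 2 ∣ N 1 2 ∧ 2 ∣ N 3 0 ∧ 2 ∣ N 3 2

theorem PInt.mul {A B : Matrix (Fin 4) (Fin 4) ℤ} (hA : PInt A) (hB : PInt B) :
    PInt (A * B) := by
  obtain ⟨a0, a1, a2, a3, a4⟩ := hA
  obtain ⟨b0, b1, b2, b3, b4⟩ := hB
  refine ⟨?_, ?_, ?_, ?_, ?_⟩
  · calc (A * B)ᵀ * K4 * (A * B) = Bᵀ * (Aᵀ * K4 * A) * B := by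
          rw [Matrix.transpose_mul]; simp only [Matrix.mul_assoc]
      _ = K4 := by rw [a0, b0]
  all_goals
    simp only [Matrix.mul_apply, Fin.sum_univ_four]
    refine dvd_add (dvd_add (dvd_add ?_ ?_) ?_) ?_ <;>
      first
      | exact Dvd.dvd.mul_right (by assumption) _
      | exact Dvd.dvd.mul_left (by assumption) _

/-- the rational matrix attached to an integral one -/
def toM (N : Matrix (Fin 4) (Fin 4) ℤ) : Matrix (Fin 4) (Fin 4) ℚ :=
  !![(N 0 0 : ℚ), N 0 1, N 0 2, 2 * N 0 3; N 1 0, N 1 1, N 1 2, 2 * N 1 3;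
    N 2 0, N 2 1, N 2 2, 2 * N 2 3; N 3 0 / 2, N 3 1 / 2, N 3 2 / 2, N 3 3]

theorem red4_toM (N : Matrix (Fin 4) (Fin 4) ℤ) :
    red4 (Emat (toM N)) = N.map (fun n : ℤ => (n : ZMod 4)) := by
  rw [Emat_aux]
  have h : ∀ x : ℚ, 2 * (x / 2) = x := fun x => by ring
  ext i j
  fin_cases i <;> fin_cases j <;> simp [red4, toM, h]

theorem toM_para {N : Matrix (Fin 4) (Fin 4) ℤ} (h : PInt N) : IsParamodular (toM N) := by
  obtain ⟨h0, ⟨a, ha⟩, ⟨b, hb⟩, ⟨c, hc⟩, ⟨d, hd⟩⟩ := h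
  refine ⟨?_, ⟨N 0 3, rfl⟩, ⟨a, by simp [toM, ha]⟩, ⟨b, by simp [toM, hb]⟩,
    ⟨N 1 3, rfl⟩, ⟨N 2 3, rfl⟩, ⟨N 3 1, by simp [toM]; ring⟩, ?_⟩
  · have h1 : ∀ i j, (((Nᵀ * K4 * N) i j : ℤ) : ℚ) = ((K4 i j : ℤ) : ℚ) := fun i j => by rw [h0]
    ext i j
    have h2 := h1 i j
    fin_cases i <;> fin_cases j <;>
      simp [Matrix.mul_apply, Fin.sum_univ_four, K4, Jmat, toM] at h2 ⊢ <;> linarith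
  · intro i j hij
    fin_cases i <;> fin_cases j <;> simp at hij <;>
      first
      | exact ⟨_, rfl⟩
      | (refine ⟨c, ?_⟩; simp [toM, hc]; done)
      | (refine ⟨d, ?_⟩; simp [toM, hd]; done)

/-- embedded `SL₂` -/
def AA (x y z w : ℤ) : Matrix (Fin 4) (Fin 4) ℤ :=
  !![x, 0, y, 0; 0, 1, 0, 0; z, 0, w, 0; 0, 0, 0, 1]

/-- Heisenberg type elements -/
def TT (s t : ℤ) : Matrix (Fin 4) (Fin 4) ℤ :=
  !![1, 0, 0, 0; -2 * t, 1, 0, 0; 0, s, 1, t; 2 * s, 0, 0, 1]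

theorem AA_P (x y z w : ℤ) (h : x * w - y * z = 1) : PInt (AA x y z w) := by
  refine ⟨?_, by simp [AA], by simp [AA], by simp [AA], by simp [AA]⟩
  ext i j
  fin_cases i <;> fin_cases j <;>
    simp [Matrix.mul_apply, Fin.sum_univ_four, K4, AA] <;> linarith

theorem TT_P (s t : ℤ) : PInt (TT s t) := by
  refine ⟨?_, by simp [TT], by simp [TT], by simp [TT], by simp [TT]⟩
  ext i j
  fin_cases i <;> fin_cases j <;>
    simp [Matrix.mul_apply, Fin.sum_univ_four, K4, TT] <;> ring

theorem sl2_aux : ∀ a c : ZMod 4, ¬(2 * a = 0 ∧ 2 * c = 0) →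
    ∃ x ∈ ([0, 1, 2, -1] : List ℤ), ∃ y ∈ ([0, 1, 2, -1] : List ℤ),
    ∃ z ∈ ([0, 1, 2, -1] : List ℤ), ∃ w ∈ ([0, 1, 2, -1] : List ℤ),
      x * w - y * z = 1 ∧ (x : ZMod 4) = a ∧ (z : ZMod 4) = c := by
  decide +kernel

theorem half_aux : ∀ b : ZMod 4, 2 * b = 0 → ∃ s ∈ ([0, 1] : List ℤ),
    ((2 * s : ℤ) : ZMod 4) = b ∧ ((-2 * s : ℤ) : ZMod 4) = b := by
  decide +kernel

/-- base vector -/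
def e1 : Fin 4 → ZMod 4 := ![1, 0, 0, 0]

theorem reach (v : Fin 4 → ZMod 4) (hv : v ∈ S48) :
    ∃ N N' : Matrix (Fin 4) (Fin 4) ℤ, PInt N ∧ PInt N' ∧ N' * N = 1 ∧
      (N.map (Int.castRingHom (ZMod 4))) *ᵥ e1 = v := by
  obtain ⟨h1, h3, h⟩ := hv
  obtain ⟨x, -, y, -, z, -, w, -, hd, hx, hz⟩ := sl2_aux _ _ h
  obtain ⟨t, -, -, ht⟩ := half_aux _ h1
  obtain ⟨s, -, hs, -⟩ := half_aux _ h3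
  refine ⟨AA x y z w * TT s t, TT (-s) (-t) * AA w (-y) (-z) x,
    (AA_P _ _ _ _ hd).mul (TT_P _ _), (TT_P _ _).mul (AA_P _ _ _ _ (by linarith)), ?_, ?_⟩
  · have hA : AA w (-y) (-z) x * AA x y z w = 1 := by
      ext i j
      fin_cases i <;> fin_cases j <;>
        simp [Matrix.mul_apply, Fin.sum_univ_four, AA] <;> linarith
    have hT : TT (-s) (-t) * TT s t = 1 := by
      ext i j
      fin_cases i <;> fin_cases j <;>
        simp [Matrix.mul_apply, Fin.sum_univ_four, TT] <;> ring
    rw [Matrix.mul_assoc, ← Matrix.mul_assoc (AA w (-y) (-z) x), hA, Matrix.one_mul, hT]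
  · push_cast at hs ht
    ext i
    fin_cases i <;>
      simp [Matrix.mulVec, dotProduct, Fin.sum_univ_four, Matrix.mul_apply, AA, TT, e1,
        hx, hz] <;> first | exact hs | simpa using ht

theorem inv_aux : ∀ a b c d v0 v1 v2 v3 : ZMod 4, 2 * v1 = 0 → 2 * v3 = 0 →
    2 * (2 * a * v0 + b * v1 + 2 * c * v2 + d * v3) = 0 := by
  intro a b c d v0 v1 v2 v3 h1 h3
  have h4 : (4 : ZMod 4) = 0 := by decide
  linear_combination b * h1 + d * h3 + (a * v0 + c * v2) * h4

theorem inv_aux2 (p q r s b d b' d' v0 v1 v2 v3 k : ZMod 4)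
    (hd : p * s - q * r = 1 + 2 * k) (h1 : 2 * v1 = 0) (h3 : 2 * v3 = 0)
    (e0 : 2 * (p * v0 + b * v1 + q * v2 + d * v3) = 0)
    (e2 : 2 * (r * v0 + b' * v1 + s * v2 + d' * v3) = 0) :
    2 * v0 = 0 ∧ 2 * v2 = 0 := by
  have h4 : (4 : ZMod 4) = 0 := by decide
  constructor
  · linear_combination s * e0 - q * e2 - 2 * v0 * hd - k * v0 * h4
      - (s * b - q * b') * h1 - (s * d - q * d') * h3
  · linear_combination p * e2 - r * e0 - 2 * v2 * hd - k * v2 * h4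
      - (p * b' - r * b) * h1 - (p * d' - r * d) * h3

theorem invariance (M : Matrix (Fin 4) (Fin 4) ℚ) (hM : IsParamodular M)
    (v : Fin 4 → ZMod 4) (hv : v ∈ S48) : (red4 (Emat M)).mulVec v ∈ S48 := by
  obtain ⟨hJ, ⟨a03, h03⟩, ⟨a10, h10⟩, ⟨a12, h12⟩, ⟨a13, h13⟩, ⟨a23, h23⟩, ⟨a31, h31⟩, hI⟩ := hM
  obtain ⟨a00, h00⟩ := hI 0 0 (by simp)
  obtain ⟨a01, h01⟩ := hI 0 1 (by simp)
  obtain ⟨a02, h02⟩ := hI 0 2 (by simp)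
  obtain ⟨a11, h11⟩ := hI 1 1 (by simp)
  obtain ⟨a20, h20⟩ := hI 2 0 (by simp)
  obtain ⟨a21, h21⟩ := hI 2 1 (by simp)
  obtain ⟨a22, h22⟩ := hI 2 2 (by simp)
  obtain ⟨a30, h30⟩ := hI 3 0 (by simp)
  obtain ⟨a32, h32⟩ := hI 3 2 (by simp)
  obtain ⟨a33, h33⟩ := hI 3 3 (by simp)
  have hdet : a00 * a22 - a02 * a20 = 1 + 2 * (a30 * a12 - a10 * a32) := by
    have := congrFun (congrFun hJ 0) 2
    simp [Matrix.mul_apply, Fin.sum_univ_four, Jmat, h00, h22, h02, h20, h30, h12, h10, h32] at this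
    have h' : ((a00 * a22 - a02 * a20 : ℤ) : ℚ) = ((1 + 2 * (a30 * a12 - a10 * a32) : ℤ) : ℚ) := by
      push_cast; linarith
    exact_mod_cast h'
  have hdet4 := congrArg (Int.cast : ℤ → ZMod 4) hdet
  push_cast at hdet4
  have hE : red4 (Emat M) = (!![a00, a01, a02, a03; 2 * a10, a11, 2 * a12, a13;
      a20, a21, a22, a23; 2 * a30, a31, 2 * a32, a33] : Matrix (Fin 4) (Fin 4) ℤ).map
        (fun n : ℤ => (n : ZMod 4)) := by
    have hn : ∀ n : ℤ, (2 * (n : ℚ)).num = 2 * n := fun n => by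
      have : (2 * (n : ℚ)) = ((2 * n : ℤ) : ℚ) := by push_cast; ring
      rw [this, Rat.num_intCast]
    rw [Emat_aux, h00, h01, h02, h03, h10, h11, h12, h13, h20, h21, h22, h23, h30, h31, h32, h33]
    ext i j
    fin_cases i <;> fin_cases j <;> simp [red4, hn]
  rw [hE]
  obtain ⟨h1, h3, h⟩ := hv
  refine ⟨?_, ?_, fun hh => h ?_⟩
  · simpa [Matrix.mulVec, dotProduct, Fin.sum_univ_four] using
      inv_aux a10 a11 a12 a13 (v 0) (v 1) (v 2) (v 3) h1 h3
  · simpa [Matrix.mulVec, dotProduct, Fin.sum_univ_four] using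
      inv_aux a30 a31 a32 a33 (v 0) (v 1) (v 2) (v 3) h1 h3
  · obtain ⟨e0, e2⟩ := hh
    simp [Matrix.mulVec, dotProduct, Fin.sum_univ_four] at e0 e2
    exact inv_aux2 _ _ _ _ _ _ _ _ _ _ _ _ _ hdet4 h1 h3 e0 e2

theorem card_aux : S48.ncard = 48 := by
  have : S48 = ((Finset.univ.filter fun v : Fin 4 → ZMod 4 =>
      2 * v 1 = 0 ∧ 2 * v 3 = 0 ∧ ¬(2 * v 0 = 0 ∧ 2 * v 2 = 0) : Finset _) : Set _) := by
    ext v; simp [S48]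
  rw [this, Set.ncard_coe_finset]
  decide +kernel

/-- `S₄₈` has 48 elements, is invariant under multiplication by `E(M) mod 4` for
every `M ∈ G_Δ`, and this action is transitive on `S₄₈`. -/
theorem S48_invariant_and_transitive :
    S48.ncard = 48 ∧
    (∀ M : Matrix (Fin 4) (Fin 4) ℚ, IsParamodular M →
      ∀ v ∈ S48, (red4 (Emat M)).mulVec v ∈ S48) ∧
    (∀ v ∈ S48, ∀ w ∈ S48, ∃ M : Matrix (Fin 4) (Fin 4) ℚ,
      IsParamodular M ∧ (red4 (Emat M)).mulVec v = w) := by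
  refine ⟨card_aux, invariance, fun v hv w hw => ?_⟩
  obtain ⟨N, N', -, hN', h1, h2⟩ := reach v hv
  obtain ⟨L, L', hL, -, -, h4⟩ := reach w hw
  refine ⟨toM (L * N'), toM_para (hL.mul hN'), ?_⟩
  rw [red4_toM]
  change ((L * N').map (Int.castRingHom (ZMod 4))) *ᵥ v = w
  rw [← h2, Matrix.mulVec_mulVec, ← Matrix.map_mul, Matrix.mul_assoc, h1, Matrix.mul_one, h4]
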